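/- Consider a general separable convex program whose objective F is (λ,w)-scaled diagonally dominant, and suppose that each pair of distinct vertices i, j ∈ V participates in at most one common factor, i.e. |{C ∈ 𝒞 : {i,j} ⊆ C}| ≤ 1 for all i ≠ j. Run the factor-graph min-sum algorithm with initial messages satisfying the factor initialization assumption. Then for every t ≥ 0, ‖x^{(t)} − x*‖_∞ ≤ K · (λ^t/(1−λ)) · Σ_{C∈𝒞} Σ_{v∈C} | (J^{(0)}_{C→v})'(x*_v) − ∂f_C/∂x_v(x*_C) |; in particular x^{(t)} → x* as t → ∞. -/

import Mathlib

open Filter Finset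

/-- Partial derivative of `F : (ι → ℝ) → ℝ` in coordinate `i` at `x`. -/
noncomputable def pd {ι : Type*} [DecidableEq ι] (F : (ι → ℝ) → ℝ) (i : ι) (x : ι → ℝ) : ℝ :=
  deriv (fun y => F (Function.update x i y)) (x i)

/-- Second partial derivative `∂²F/∂x_i∂x_j` of `F : (ι → ℝ) → ℝ` at `x`. -/
noncomputable def pd2 {ι : Type*} [DecidableEq ι] (F : (ι → ℝ) → ℝ) (i j : ι) (x : ι → ℝ) : ℝ :=
  pd (pd F j) i x

/-!
A message into a variable summarizes the objective of the part of the program behind it, so the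
minimizers hidden in one round of updates can be glued to the configuration being estimated. In a
linear hypergraph distinct factors at a variable share no other variable, hence the gluing is
consistent and its result is stationary for the true objective in that variable. Comparing it with
`xstar`, scaled diagonal dominance bounds the scaled error at the variable by `lam` times the
largest scaled error at its neighbours. Each round thus improves the accuracy of the messages by
the factor `lam`; the derivatives of the initial messages at `xstar` bound the accuracy at the
start.
-/

section PartialDerivatives

theorem dependsOn_comp_eval {ι : Type*} (h : ℝ → ℝ) (i : ι) :
    DependsOn (fun x : ι → ℝ => h (x i)) {i} :=
  fun _ _ hxy => congrArg h (hxy i rfl)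

theorem contDiff_comp_eval {ι : Type*} [Fintype ι] {n : WithTop ℕ∞} {h : ℝ → ℝ}
    (hh : ContDiff ℝ n h) (i : ι) : ContDiff ℝ n (fun x : ι → ℝ => h (x i)) :=
  hh.comp (contDiff_apply ℝ ℝ i)

variable {ι : Type*} [DecidableEq ι]

theorem pd_eq_of_dependsOn_sub {F G : (ι → ℝ) → ℝ} {i : ι}
    (h : DependsOn (fun x => F x - G x) {i}ᶜ) : pd F i = pd G i := by
  funext x
  have hslice : (fun s => F (Function.update x i s)) =
      fun s => G (Function.update x i s) + (F x - G x) := by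
    funext s
    linarith [h fun j hj => Function.update_of_ne hj s x]
  rw [pd, pd, hslice, deriv_add_const]

theorem pd_eq_zero_of_dependsOn {F : (ι → ℝ) → ℝ} {s : Set ι} {i : ι}
    (hF : DependsOn F s) (hi : i ∉ s) : pd F i = 0 := by
  have hsub : DependsOn (fun x => F x - (fun _ : ι → ℝ => (0 : ℝ)) x) {i}ᶜ := by
    simpa using hF.mono (Set.subset_compl_singleton_iff.2 hi)
  rw [pd_eq_of_dependsOn_sub hsub]
  funext x
  exact deriv_const _ _

theorem dependsOn_pd {F : (ι → ℝ) → ℝ} {s : Finset ι} (hF : DependsOn F s) (i : ι) :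
    DependsOn (pd F i) s := by
  by_cases hi : i ∈ s
  · intro x y hxy
    have hslice (r : ℝ) : F (Function.update x i r) = F (Function.update y i r) :=
      hF.update i r fun j hj => hxy j (Finset.mem_of_mem_erase hj)
    simp only [pd, hslice, hxy i hi]
  · rw [pd_eq_zero_of_dependsOn hF (by exact_mod_cast hi)]
    exact (dependsOn_const 0).mono (Set.empty_subset _)

theorem pd_comp_eval (h : ℝ → ℝ) (i : ι) :
    pd (fun x => h (x i)) i = fun x => deriv h (x i) := by
  funext x
  simp only [pd, Function.update_self]

theorem pd_comp_eval_of_ne (h : ℝ → ℝ) {i j : ι} (hji : j ≠ i) :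
    pd (fun x => h (x i)) j = 0 :=
  pd_eq_zero_of_dependsOn (dependsOn_comp_eval h i) hji

theorem pd_eq_fderiv [Finite ι] {F : (ι → ℝ) → ℝ} {x : ι → ℝ} (hF : DifferentiableAt ℝ F x)
    (i : ι) : pd F i x = fderiv ℝ F x (Pi.single i 1) := by
  cases nonempty_fintype ι
  have hF' : HasFDerivAt F (fderiv ℝ F x) (Function.update x i (x i)) := by
    rw [Function.update_eq_self]
    exact hF.hasFDerivAt
  exact (hF'.comp_hasDerivAt (x i) (hasDerivAt_update x i (x i))).deriv

theorem pd_add [Finite ι] {F G : (ι → ℝ) → ℝ} (hF : Differentiable ℝ F)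
    (hG : Differentiable ℝ G) (i : ι) :
    pd (fun x => F x + G x) i = fun x => pd F i x + pd G i x := by
  cases nonempty_fintype ι
  funext x
  rw [pd_eq_fderiv (hF.fun_add hG x), pd_eq_fderiv (hF x), pd_eq_fderiv (hG x),
    fderiv_fun_add (hF x) (hG x), add_apply]

theorem pd_sum [Finite ι] {α : Type*} {s : Finset α} {F : α → (ι → ℝ) → ℝ}
    (hF : ∀ a ∈ s, Differentiable ℝ (F a)) (i : ι) :
    pd (fun x => ∑ a ∈ s, F a x) i = fun x => ∑ a ∈ s, pd (F a) i x := by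
  cases nonempty_fintype ι
  funext x
  rw [pd_eq_fderiv (Differentiable.fun_sum hF x), fderiv_fun_sum fun a ha => hF a ha x,
    _root_.sum_apply]
  exact Finset.sum_congr rfl fun a ha => (pd_eq_fderiv (hF a ha x) i).symm

variable [Fintype ι]

theorem contDiff_pd {m n : WithTop ℕ∞} {F : (ι → ℝ) → ℝ} (hF : ContDiff ℝ n F)
    (hmn : m + 1 ≤ n) (i : ι) : ContDiff ℝ m (pd F i) := by
  have hF' : Differentiable ℝ F :=
    hF.differentiable (one_pos.trans_le (le_add_self.trans hmn)).ne'
  rw [funext fun x => pd_eq_fderiv (hF' x) i]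
  exact (hF.fderiv_right hmn).clm_apply contDiff_const

theorem differentiable_pd {F : (ι → ℝ) → ℝ} (hF : ContDiff ℝ 2 F) (i : ι) :
    Differentiable ℝ (pd F i) :=
  (contDiff_pd hF one_add_one_eq_two.le i).differentiable one_ne_zero

theorem pd2_comm {F : (ι → ℝ) → ℝ} (hF : ContDiff ℝ 2 F) (i j : ι) : pd2 F i j = pd2 F j i := by
  funext x
  have hF' : Differentiable ℝ F := hF.differentiable two_ne_zero
  have hdF : DifferentiableAt ℝ (fderiv ℝ F) x :=
    (hF.fderiv_right one_add_one_eq_two.le).differentiable one_ne_zero x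
  have hsnd (a b : ι) :
      pd2 F a b x = fderiv ℝ (fderiv ℝ F) x (Pi.single a 1) (Pi.single b 1) := by
    rw [pd2, pd_eq_fderiv (differentiable_pd hF b x), funext fun x => pd_eq_fderiv (hF' x) b,
      fderiv_clm_apply hdF (differentiableAt_const _)]
    simp
  rw [hsnd, hsnd]
  exact (hF.contDiffAt.isSymmSndFDerivAt (by simp)).eq _ _

theorem exists_sub_eq_sum_pd {g : (ι → ℝ) → ℝ} (hg : Differentiable ℝ g) (x y : ι → ℝ) :
    ∃ z, g y - g x = ∑ j, (y j - x j) * pd g j z := by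
  obtain ⟨z, -, hz⟩ := domain_mvt (fun p _ => (hg p).hasFDerivAt.hasFDerivWithinAt)
    convex_univ (Set.mem_univ x) (Set.mem_univ y)
  refine ⟨z, hz.trans ?_⟩
  have hbasis (j : ι) : (Pi.single j 1 : ι → ℝ) = fun k => if j = k then 1 else 0 := by
    funext k
    simp only [Pi.single_apply, eq_comm]
  rw [← ContinuousLinearMap.coe_coe, LinearMap.pi_apply_eq_sum_univ]
  simp only [pd_eq_fderiv (hg z), hbasis, Pi.sub_apply, ContinuousLinearMap.coe_coe, smul_eq_mul]

end PartialDerivatives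

section CoordinateMinimum

theorem le_of_forall_ne_lt {α β : Type*} [Preorder β] {g : α → β} {a : α}
    (h : ∀ b, b ≠ a → g a < g b) (b : α) : g a ≤ g b := by
  rcases eq_or_ne b a with rfl | hba
  exacts [le_rfl, (h b hba).le]

variable {ι : Type*} [DecidableEq ι]

/-- `y` minimizes `G` along the line through `y` in the direction of coordinate `i`. -/
def IsCoordMin (G : (ι → ℝ) → ℝ) (i : ι) (y : ι → ℝ) : Prop :=
  ∀ s, G y ≤ G (Function.update y i s)

theorem IsCoordMin.pd_eq_zero {G : (ι → ℝ) → ℝ} {i : ι} {y : ι → ℝ} (h : IsCoordMin G i y) :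
    pd G i y = 0 :=
  IsLocalMin.deriv_eq_zero <| Eventually.of_forall fun s => by
    simpa only [Function.update_eq_self] using h s

theorem IsCoordMin.of_dependsOn_sub {G H : (ι → ℝ) → ℝ} {i : ι} {y : ι → ℝ}
    (h : IsCoordMin G i y) (hGH : DependsOn (fun x => G x - H x) {i}ᶜ) : IsCoordMin H i y := by
  intro s
  have hsub := hGH fun j hj => Function.update_of_ne hj s y
  linarith [h s]

end CoordinateMinimum

section Contraction

theorem le_mul_of_le_mul_max {lam m ε : ℝ} (hlam0 : 0 ≤ lam) (hlam1 : lam < 1) (hε : 0 ≤ ε)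
    (hm : m ≤ lam * max m ε) : m ≤ lam * ε := by
  rcases le_total m ε with hmε | hεm
  · rwa [max_eq_right hmε] at hm
  · rw [max_eq_left hεm] at hm
    have hm0 : m ≤ 0 := by nlinarith
    exact hm0.trans (mul_nonneg hlam0 hε)

variable {ι : Type*} [Fintype ι] [DecidableEq ι] {M lam : ℝ} {w : ι → ℝ} {i : ι}

/-- The distance between `x` and `y` in coordinate `j`, measured in units of the weight `w j`. -/
noncomputable def scaledDist (w x y : ι → ℝ) (j : ι) : ℝ := |x j - y j| / w j

/-- The gradient of `g` is dominated by its `i`-th entry, which is at least `M`. For `g = pd F i`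
this is the `i`-th row of `(lam, w)`-scaled diagonal dominance of the Hessian of `F`. -/
structure CoordDominant (M lam : ℝ) (w : ι → ℝ) (g : (ι → ℝ) → ℝ) (i : ι) : Prop where
  le_pd : ∀ x, M ≤ pd g i x
  sum_le : ∀ x, ∑ j ∈ univ.erase i, w j * |pd g j x| ≤ lam * w i * pd g i x

theorem CoordDominant.ratio_nonneg {g : (ι → ℝ) → ℝ} (hg : CoordDominant M lam w g i)
    (hM : 0 < M) (hw : ∀ j, 0 < w j) : 0 ≤ lam := by
  have hpd : 0 < pd g i 0 := hM.trans_le (hg.le_pd 0)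
  have hsum : 0 ≤ lam * w i * pd g i 0 :=
    (sum_nonneg fun j _ => mul_nonneg (hw j).le (abs_nonneg _)).trans (hg.sum_le 0)
  rw [mul_assoc] at hsum
  exact nonneg_of_mul_nonneg_left hsum (mul_pos (hw i) hpd)

theorem CoordDominant.of_forall_exists {g h : (ι → ℝ) → ℝ} (hg : CoordDominant M lam w g i)
    (hM : 0 < M) (hw : ∀ j, 0 < w j)
    (hgh : ∀ x, ∃ X, pd g i X ≤ pd h i x ∧ ∀ j ≠ i, |pd h j x| ≤ |pd g j X|) :
    CoordDominant M lam w h i := by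
  refine ⟨fun x => ?_, fun x => ?_⟩ <;> obtain ⟨X, hdiag, hoff⟩ := hgh x
  · exact (hg.le_pd X).trans hdiag
  · calc ∑ j ∈ univ.erase i, w j * |pd h j x|
        ≤ ∑ j ∈ univ.erase i, w j * |pd g j X| := sum_le_sum fun j hj =>
          mul_le_mul_of_nonneg_left (hoff j (ne_of_mem_erase hj)) (hw j).le
      _ ≤ lam * w i * pd g i X := hg.sum_le X
      _ ≤ lam * w i * pd h i x :=
          mul_le_mul_of_nonneg_left hdiag (mul_nonneg (hg.ratio_nonneg hM hw) (hw i).le)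

theorem CoordDominant.abs_sum_le {g : (ι → ℝ) → ℝ} (hg : CoordDominant M lam w g i)
    (hw : ∀ j, 0 < w j) {x y : ι → ℝ} {B : ℝ} (hB0 : 0 ≤ B)
    (hB : ∀ j ≠ i, pd g j ≠ 0 → scaledDist w y x j ≤ B) (z : ι → ℝ) :
    |∑ j ∈ univ.erase i, (y j - x j) * pd g j z| ≤ lam * B * w i * pd g i z := by
  have hterm : ∀ j ∈ univ.erase i, |(y j - x j) * pd g j z| ≤ B * (w j * |pd g j z|) := by
    intro j hj
    by_cases hpd : pd g j = 0
    · simp [hpd]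
    · have hdist : |y j - x j| ≤ B * w j :=
        (div_le_iff₀ (hw j)).1 (hB j (ne_of_mem_erase hj) hpd)
      rw [abs_mul, ← mul_assoc]
      exact mul_le_mul_of_nonneg_right hdist (abs_nonneg _)
  calc |∑ j ∈ univ.erase i, (y j - x j) * pd g j z|
      ≤ ∑ j ∈ univ.erase i, B * (w j * |pd g j z|) :=
        (abs_sum_le_sum_abs _ _).trans (sum_le_sum hterm)
    _ = B * ∑ j ∈ univ.erase i, w j * |pd g j z| := (mul_sum ..).symm
    _ ≤ B * (lam * w i * pd g i z) := mul_le_mul_of_nonneg_left (hg.sum_le z) hB0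
    _ = lam * B * w i * pd g i z := by ring

theorem CoordDominant.scaledDist_le {g : (ι → ℝ) → ℝ} (hg : CoordDominant M lam w g i)
    (hM : 0 < M) (hw : ∀ j, 0 < w j) (hdiff : Differentiable ℝ g) {x y : ι → ℝ} {B : ℝ}
    (hB0 : 0 ≤ B) (hB : ∀ j ≠ i, pd g j ≠ 0 → scaledDist w y x j ≤ B) :
    scaledDist w y x i ≤ lam * B + |g y - g x| / (M * w i) := by
  obtain ⟨z, hz⟩ := exists_sub_eq_sum_pd hdiff x y
  rw [← add_sum_erase _ _ (mem_univ i)] at hz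
  have hpd : 0 < pd g i z := hM.trans_le (hg.le_pd z)
  have hgrad : |g y - g x| ≤ |g y - g x| / M * pd g i z := by
    rw [div_mul_eq_mul_div, le_div_iff₀ hM]
    exact mul_le_mul_of_nonneg_left (hg.le_pd z) (abs_nonneg _)
  have hmul : |y i - x i| * pd g i z ≤ (lam * B * w i + |g y - g x| / M) * pd g i z := by
    calc |y i - x i| * pd g i z
        = |(g y - g x) - ∑ j ∈ univ.erase i, (y j - x j) * pd g j z| := by
          rw [hz, add_sub_cancel_right, abs_mul, abs_of_pos hpd]
      _ ≤ |g y - g x| + |∑ j ∈ univ.erase i, (y j - x j) * pd g j z| := abs_sub _ _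
      _ ≤ (lam * B * w i + |g y - g x| / M) * pd g i z := by
          linarith [hg.abs_sum_le hw hB0 hB z]
  have hwi : w i ≠ 0 := (hw i).ne'
  rw [scaledDist, div_le_iff₀ (hw i)]
  calc |y i - x i| ≤ lam * B * w i + |g y - g x| / M := le_of_mul_le_mul_right hmul hpd
    _ = (lam * B + |g y - g x| / (M * w i)) * w i := by field_simp

end Contraction

section LinearHypergraph

variable {V : Type*} [DecidableEq V]

/-- The hyperedges of `𝒞` containing the vertex `i`, written `N_f(i)` in the min-sum literature. -/
def incidentEdges (𝒞 : Finset (Finset V)) (i : V) : Finset (Finset V) := {C ∈ 𝒞 | i ∈ C}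

theorem mem_incidentEdges {𝒞 : Finset (Finset V)} {i : V} {C : Finset V} :
    C ∈ incidentEdges 𝒞 i ↔ C ∈ 𝒞 ∧ i ∈ C :=
  mem_filter

/-- A linear hypergraph: two distinct vertices lie in at most one common hyperedge. -/
def IsLinearHypergraph (𝒞 : Finset (Finset V)) : Prop :=
  ∀ i j : V, i ≠ j → #{C ∈ 𝒞 | i ∈ C ∧ j ∈ C} ≤ 1

variable {𝒞 : Finset (Finset V)} {i j : V}

theorem IsLinearHypergraph.eq_of_mem (h : IsLinearHypergraph 𝒞) (hji : j ≠ i) {C D : Finset V}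
    (hC : C ∈ incidentEdges 𝒞 i) (hjC : j ∈ C) (hD : D ∈ incidentEdges 𝒞 i) (hjD : j ∈ D) :
    C = D := by
  rw [mem_incidentEdges] at hC hD
  exact card_le_one.1 (h i j hji.symm) C (mem_filter.2 ⟨hC.1, hC.2, hjC⟩)
    D (mem_filter.2 ⟨hD.1, hD.2, hjD⟩)

theorem IsLinearHypergraph.exists_glue (h : IsLinearHypergraph 𝒞) {α : Type*} {s : α}
    {u : Finset V → V → α} (hu : ∀ C ∈ incidentEdges 𝒞 i, u C i = s) :
    ∃ X : V → α, X i = s ∧ ∀ C ∈ incidentEdges 𝒞 i, ∀ j ∈ C, X j = u C j := by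
  have hcoord (j : V) : ∃ a, (j = i → a = s) ∧ ∀ C ∈ incidentEdges 𝒞 i, j ∈ C → a = u C j := by
    rcases eq_or_ne j i with rfl | hji
    · exact ⟨s, fun _ => rfl, fun C hC _ => (hu C hC).symm⟩
    · by_cases hex : ∃ C ∈ incidentEdges 𝒞 i, j ∈ C
      · obtain ⟨C, hC, hjC⟩ := hex
        exact ⟨u C j, fun hj => absurd hj hji, fun D hD hjD =>
          by rw [h.eq_of_mem hji hC hjC hD hjD]⟩
      · exact ⟨s, fun _ => rfl, fun C hC hjC => absurd ⟨C, hC, hjC⟩ hex⟩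
  choose X hXi hX using hcoord
  exact ⟨X, hXi i rfl, fun C hC j => hX j C hC⟩

theorem IsLinearHypergraph.abs_sum_incidentEdges (h : IsLinearHypergraph 𝒞) (hji : j ≠ i)
    {b : Finset V → ℝ} (hb : ∀ C ∈ incidentEdges 𝒞 i, j ∉ C → b C = 0) :
    |∑ C ∈ incidentEdges 𝒞 i, b C| = ∑ C ∈ incidentEdges 𝒞 i, |b C| := by
  by_cases hex : ∃ C ∈ incidentEdges 𝒞 i, j ∈ C
  · obtain ⟨C, hC, hjC⟩ := hex
    have hzero : ∀ D ∈ incidentEdges 𝒞 i, D ≠ C → b D = 0 := fun D hD hDC =>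
      hb D hD fun hjD => hDC (h.eq_of_mem hji hD hjD hC hjC)
    rw [sum_eq_single_of_mem C hC hzero, sum_eq_single_of_mem C hC fun D hD hDC => by
      rw [hzero D hD hDC, abs_zero]]
  · have hzero : ∀ C ∈ incidentEdges 𝒞 i, b C = 0 := fun C hC =>
      hb C hC fun hjC => hex ⟨C, hC, hjC⟩
    rw [sum_eq_zero hzero, abs_zero, sum_eq_zero fun C hC => by rw [hzero C hC, abs_zero]]

end LinearHypergraph

/-- A separable program on the variables `V`: a term `f i` for every variable and a factor `fC C`
for every hyperedge `C` of `factors`, all twice continuously differentiable. A factor is a function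
of the whole configuration whose value depends only on the coordinates in its hyperedge. -/
structure SeparableProgram (V : Type*) [Fintype V] [DecidableEq V] where
  factors : Finset (Finset V)
  f : V → ℝ → ℝ
  fC : Finset V → (V → ℝ) → ℝ
  contDiff_f : ∀ i, ContDiff ℝ 2 (f i)
  contDiff_fC : ∀ C ∈ factors, ContDiff ℝ 2 (fC C)
  dependsOn_fC : ∀ C ∈ factors, DependsOn (fC C) C

namespace SeparableProgram

variable {V : Type*} [Fintype V] [DecidableEq V] (P : SeparableProgram V)
  {M lam ε : ℝ} {w xstar : V → ℝ} {J J' : Finset V → V → ℝ → ℝ} {i : V}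

/-- The objective function of the program. -/
def objective (x : V → ℝ) : ℝ := ∑ i, P.f i (x i) + ∑ C ∈ P.factors, P.fC C x

/-- The part of the objective which involves the variable `i`, with each incident factor `fC C`
replaced by the function `h C`. -/
def starObjective (i : V) (h : Finset V → (V → ℝ) → ℝ) (x : V → ℝ) : ℝ :=
  P.f i (x i) + ∑ C ∈ incidentEdges P.factors i, h C x

section Star

theorem dependsOn_objective_sub_starObjective (i : V) :
    DependsOn (fun x => P.objective x - P.starObjective i P.fC x) {i}ᶜ := by
  have hrest (x : V → ℝ) : P.objective x - P.starObjective i P.fC x =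
      ∑ k ∈ univ.erase i, P.f k (x k) + ∑ C ∈ P.factors with i ∉ C, P.fC C x := by
    rw [objective, starObjective, incidentEdges, ← add_sum_erase univ _ (mem_univ i),
      ← sum_filter_add_sum_filter_not P.factors (i ∈ ·)]
    ring
  intro x y hxy
  simp only [hrest]
  congr 1
  · exact sum_congr rfl fun k hk => by rw [hxy k (ne_of_mem_erase hk)]
  · refine sum_congr rfl fun C hC => ?_
    rw [mem_filter] at hC
    exact P.dependsOn_fC C hC.1 fun k hk => hxy k fun hki => hC.2 (hki ▸ hk)

theorem pd_objective (i : V) : pd P.objective i = pd (P.starObjective i P.fC) i :=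
  pd_eq_of_dependsOn_sub (P.dependsOn_objective_sub_starObjective i)

theorem contDiff_objective : ContDiff ℝ 2 P.objective :=
  (ContDiff.sum fun i _ => contDiff_comp_eval (P.contDiff_f i) i).add
    (ContDiff.sum P.contDiff_fC)

theorem contDiff_fC_of_incident : ∀ C ∈ incidentEdges P.factors i, ContDiff ℝ 2 (P.fC C) :=
  fun C hC => P.contDiff_fC C (mem_incidentEdges.1 hC).1

variable {h : Finset V → (V → ℝ) → ℝ}

theorem contDiff_starObjective (hh : ∀ C ∈ incidentEdges P.factors i, ContDiff ℝ 2 (h C)) :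
    ContDiff ℝ 2 (P.starObjective i h) :=
  (contDiff_comp_eval (P.contDiff_f i) i).add (ContDiff.sum hh)

theorem pd_starObjective (hh : ∀ C ∈ incidentEdges P.factors i, ContDiff ℝ 2 (h C)) :
    pd (P.starObjective i h) i =
      fun x => deriv (P.f i) (x i) + ∑ C ∈ incidentEdges P.factors i, pd (h C) i x := by
  have hdiff : ∀ C ∈ incidentEdges P.factors i, Differentiable ℝ (h C) :=
    fun C hC => (hh C hC).differentiable two_ne_zero
  have hf : Differentiable ℝ fun x : V → ℝ => P.f i (x i) :=
    (contDiff_comp_eval (P.contDiff_f i) i).differentiable two_ne_zero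
  refine (pd_add hf (Differentiable.fun_sum hdiff) i).trans ?_
  rw [pd_comp_eval, pd_sum hdiff]

theorem pd2_starObjective (hh : ∀ C ∈ incidentEdges P.factors i, ContDiff ℝ 2 (h C)) (j : V)
    (x : V → ℝ) : pd2 (P.starObjective i h) j i x =
      pd (fun x => deriv (P.f i) (x i)) j x +
        ∑ C ∈ incidentEdges P.factors i, pd2 (h C) j i x := by
  have hdiff : ∀ C ∈ incidentEdges P.factors i, Differentiable ℝ (pd (h C) i) :=
    fun C hC => differentiable_pd (hh C hC) i
  have hf : Differentiable ℝ fun x : V → ℝ => deriv (P.f i) (x i) := by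
    rw [← pd_comp_eval]
    exact differentiable_pd (contDiff_comp_eval (P.contDiff_f i) i) i
  rw [pd2, pd_starObjective P hh, pd_add hf (Differentiable.fun_sum hdiff), pd_sum hdiff]
  rfl

theorem pd2_starObjective_of_ne (hh : ∀ C ∈ incidentEdges P.factors i, ContDiff ℝ 2 (h C)) {j : V}
    (hji : j ≠ i) (x : V → ℝ) : pd2 (P.starObjective i h) j i x =
      ∑ C ∈ incidentEdges P.factors i, pd2 (h C) j i x := by
  rw [P.pd2_starObjective hh, pd_comp_eval_of_ne _ hji, Pi.zero_apply, zero_add]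

theorem dependsOn_pd2_fC {C : Finset V} (hC : C ∈ P.factors) (j i : V) :
    DependsOn (pd2 (P.fC C) j i) C :=
  dependsOn_pd (dependsOn_pd (P.dependsOn_fC C hC) i) j

theorem pd2_fC_eq_zero {C : Finset V} (hC : C ∈ P.factors) {j : V} (hj : j ∉ C) (i : V) :
    pd2 (P.fC C) j i = 0 :=
  pd_eq_zero_of_dependsOn (dependsOn_pd (P.dependsOn_fC C hC) i) (by exact_mod_cast hj)

theorem exists_mem_of_pd_pd_objective_ne_zero {j : V} (hji : j ≠ i)
    (hpd : pd (pd P.objective i) j ≠ 0) : ∃ C ∈ incidentEdges P.factors i, j ∈ C := by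
  by_contra! hj
  refine hpd (funext fun x => ?_)
  rw [pd_objective]
  refine (P.pd2_starObjective_of_ne P.contDiff_fC_of_incident hji x).trans
    (sum_eq_zero fun C hC => ?_)
  rw [P.pd2_fC_eq_zero (mem_incidentEdges.1 hC).1 (hj C hC), Pi.zero_apply]

theorem coordDominant_objective (hM : ∀ i x, M ≤ pd2 P.objective i i x)
    (hdd : ∀ i x, ∑ j ∈ univ.erase i, w j * |pd2 P.objective i j x| ≤
      lam * w i * pd2 P.objective i i x) (i : V) :
    CoordDominant M lam w (pd P.objective i) i where
  le_pd := hM i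
  sum_le x := by
    have hrow := hdd i x
    simp only [pd2_comm P.contDiff_objective i] at hrow
    exact hrow

-- The points `u C` at which the replaced factors are compared with the original ones differ from
-- factor to factor; they are restrictions of one point because the hypergraph is linear.
theorem coordDominant_starObjective (hlin : IsLinearHypergraph P.factors) (hM : 0 < M)
    (hw : ∀ j, 0 < w j) (hdom : CoordDominant M lam w (pd P.objective i) i)
    (hh : ∀ C ∈ incidentEdges P.factors i, ContDiff ℝ 2 (h C))
    (hcmp : ∀ x, ∀ C ∈ incidentEdges P.factors i, ∃ u : V → ℝ, u i = x i ∧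
      pd2 (P.fC C) i i u ≤ pd2 (h C) i i x ∧
      ∀ j ≠ i, |pd2 (h C) j i x| ≤ |pd2 (P.fC C) j i u|) :
    CoordDominant M lam w (pd (P.starObjective i h) i) i := by
  refine hdom.of_forall_exists hM hw fun x => ?_
  choose! u hui hdiag hoff using hcmp x
  obtain ⟨X, hXi, hXu⟩ := hlin.exists_glue hui
  have hpd2 (j : V) : ∀ C ∈ incidentEdges P.factors i,
      pd2 (P.fC C) j i X = pd2 (P.fC C) j i (u C) := fun C hC =>
    P.dependsOn_pd2_fC (mem_incidentEdges.1 hC).1 j i (hXu C hC)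
  rw [pd_objective]
  refine ⟨X, ?_, fun j hji => ?_⟩
  · change pd2 (P.starObjective i P.fC) i i X ≤ pd2 (P.starObjective i h) i i x
    rw [P.pd2_starObjective P.contDiff_fC_of_incident, P.pd2_starObjective hh, pd_comp_eval,
      sum_congr rfl (hpd2 i)]
    simp only [hXi]
    exact add_le_add_right (sum_le_sum hdiag) _
  · have hzero : ∀ C ∈ incidentEdges P.factors i, j ∉ C → pd2 (P.fC C) j i (u C) = 0 :=
      fun C hC hjC => by rw [P.pd2_fC_eq_zero (mem_incidentEdges.1 hC).1 hjC, Pi.zero_apply]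
    calc |pd2 (P.starObjective i h) j i x|
        = |∑ C ∈ incidentEdges P.factors i, pd2 (h C) j i x| := by
          rw [P.pd2_starObjective_of_ne hh hji]
      _ ≤ ∑ C ∈ incidentEdges P.factors i, |pd2 (P.fC C) j i (u C)| :=
          (abs_sum_le_sum_abs _ _).trans (sum_le_sum fun C hC => hoff C hC j hji)
      _ = |∑ C ∈ incidentEdges P.factors i, pd2 (P.fC C) j i (u C)| :=
          (hlin.abs_sum_incidentEdges hji hzero).symm
      _ = |pd2 (P.starObjective i P.fC) j i X| := by
          rw [P.pd2_starObjective_of_ne P.contDiff_fC_of_incident hji, sum_congr rfl (hpd2 j)]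

theorem isCoordMin_starObjective_of_glue {y X : V → ℝ} {u : Finset V → V → ℝ}
    (hy : IsCoordMin (P.starObjective i h) i y) (hXi : X i = y i)
    (hXu : ∀ C ∈ incidentEdges P.factors i, ∀ j ∈ C, X j = u C j)
    (hle : ∀ C ∈ incidentEdges P.factors i, ∀ s, h C (Function.update y i s) - h C y ≤
      P.fC C (Function.update (u C) i s) - P.fC C (u C)) :
    IsCoordMin (P.starObjective i P.fC) i X := by
  intro s
  have hsum : ∑ C ∈ incidentEdges P.factors i, (h C (Function.update y i s) - h C y) ≤
      ∑ C ∈ incidentEdges P.factors i, (P.fC C (Function.update X i s) - P.fC C X) := by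
    refine sum_le_sum fun C hC => ?_
    have hlocal := P.dependsOn_fC C (mem_incidentEdges.1 hC).1
    have hupd : P.fC C (Function.update X i s) = P.fC C (Function.update (u C) i s) :=
      hlocal.update i s fun j hj => hXu C hC j (mem_of_mem_erase hj)
    rw [hlocal (hXu C hC), hupd]
    exact hle C hC s
  have hys := hy s
  simp only [starObjective, Function.update_self, sum_sub_distrib, hXi] at hys hsum ⊢
  linarith

end Star

section Messages

/-- The message from the variable `i` to the factor `C`, given the messages `J` from factors to
variables. -/
def variableMessage (J : Finset V → V → ℝ → ℝ) (i : V) (C : Finset V) (s : ℝ) : ℝ :=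
  P.f i s + ∑ D ∈ (incidentEdges P.factors i).erase C, J D i s

/-- The function of the configuration on `C` which is minimized, with the coordinate `i` held
fixed, to form the new message from the factor `C` to the variable `i`. -/
def factorObjective (J : Finset V → V → ℝ → ℝ) (C : Finset V) (i : V) (x : V → ℝ) : ℝ :=
  P.fC C x + ∑ j ∈ C.erase i, P.variableMessage J j C (x j)

/-- The messages `J'` from factors to variables arise from `J` by one round of min-sum, all minima
being attained. -/
def IsUpdate (J J' : Finset V → V → ℝ → ℝ) : Prop :=
  ∀ C ∈ P.factors, ∀ i ∈ C, ∀ s, IsLeast (P.factorObjective J C i '' {x | x i = s}) (J' C i s)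

/-- The factor of the star of `i` with hyperedge `C`, summarized by its message to `i` unless `C`
belongs to `𝒟`. -/
def mixedFactor (J : Finset V → V → ℝ → ℝ) (𝒟 : Finset (Finset V)) (i : V) (C : Finset V)
    (x : V → ℝ) : ℝ :=
  if C ∈ 𝒟 then P.fC C x else J C i (x i)

/-- The messages `J` locate `xstar` up to the scaled error `ε`: whenever some of the factors at a
variable `i` are summarized by their messages, `y` minimizes the resulting star objective in
coordinate `i`, and the scaled error of `y` over the remaining factors is largest at `i`, this error
is at most `ε`. -/
def IsAccurate (J : Finset V → V → ℝ → ℝ) (w xstar : V → ℝ) (ε : ℝ) : Prop :=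
  ∀ (i : V) (𝒟 : Finset (Finset V)) (y : V → ℝ),
    IsCoordMin (P.starObjective i (P.mixedFactor J 𝒟 i)) i y →
    (∀ C ∈ 𝒟, ∀ j ∈ C, scaledDist w y xstar j ≤ scaledDist w y xstar i) →
    scaledDist w y xstar i ≤ ε

variable {𝒟 : Finset (Finset V)} {C : Finset V}

theorem mixedFactor_of_mem (hC : C ∈ 𝒟) : P.mixedFactor J 𝒟 i C = P.fC C :=
  funext fun _ => if_pos hC

theorem mixedFactor_of_notMem (hC : C ∉ 𝒟) : P.mixedFactor J 𝒟 i C = fun x => J C i (x i) :=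
  funext fun _ => if_neg hC

end Messages

section Initialization

/-- The factor initialization assumption: the initial messages are twice continuously
differentiable and at least as curved as a one-dimensional section of the corresponding factor. -/
structure IsInitialMessage (J : Finset V → V → ℝ → ℝ) : Prop where
  contDiff : ∀ C ∈ P.factors, ∀ i ∈ C, ContDiff ℝ 2 (J C i)
  exists_pd2_le : ∀ C ∈ P.factors, ∀ i ∈ C, ∃ z : V → ℝ, ∀ s,
    pd2 (P.fC C) i i (Function.update z i s) ≤ deriv (deriv (J C i)) s

/-- The total error at `xstar` of the derivatives of the messages `J`. -/
noncomputable def gradientError (J : Finset V → V → ℝ → ℝ) (xstar : V → ℝ) : ℝ :=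
  ∑ C ∈ P.factors, ∑ v ∈ C, |deriv (J C v) (xstar v) - pd (P.fC C) v xstar|

theorem gradientError_nonneg (J : Finset V → V → ℝ → ℝ) (xstar : V → ℝ) :
    0 ≤ P.gradientError J xstar :=
  sum_nonneg fun _ _ => sum_nonneg fun _ _ => abs_nonneg _

variable {P} {𝒟 : Finset (Finset V)}

theorem IsInitialMessage.contDiff_mixedFactor (hJ : P.IsInitialMessage J) :
    ∀ C ∈ incidentEdges P.factors i, ContDiff ℝ 2 (P.mixedFactor J 𝒟 i C) := by
  intro C hC
  obtain ⟨hCP, hiC⟩ := mem_incidentEdges.1 hC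
  by_cases h𝒟 : C ∈ 𝒟
  · rw [mixedFactor_of_mem P h𝒟]
    exact P.contDiff_fC C hCP
  · rw [mixedFactor_of_notMem P h𝒟]
    exact contDiff_comp_eval (hJ.contDiff C hCP i hiC) i

theorem pd2_mixedFactor_eq_zero {C : Finset V} (hC : C ∈ P.factors) {j : V} (hji : j ≠ i)
    (hj : C ∈ 𝒟 → j ∉ C) : pd2 (P.mixedFactor J 𝒟 i C) j i = 0 := by
  by_cases h𝒟 : C ∈ 𝒟
  · rw [mixedFactor_of_mem P h𝒟, P.pd2_fC_eq_zero hC (hj h𝒟)]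
  · change pd (pd _ i) j = 0
    rw [mixedFactor_of_notMem P h𝒟, pd_comp_eval, pd_comp_eval_of_ne _ hji]

theorem exists_mem_of_pd_pd_starObjective_ne_zero (hJ : P.IsInitialMessage J) {j : V}
    (hji : j ≠ i) (hpd : pd (pd (P.starObjective i (P.mixedFactor J 𝒟 i)) i) j ≠ 0) :
    ∃ C ∈ 𝒟, j ∈ C := by
  by_contra! hj
  refine hpd (funext fun x => ?_)
  refine (P.pd2_starObjective_of_ne hJ.contDiff_mixedFactor hji x).trans
    (sum_eq_zero fun C hC => ?_)
  rw [pd2_mixedFactor_eq_zero (mem_incidentEdges.1 hC).1 hji (hj C), Pi.zero_apply]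

theorem IsInitialMessage.coordDominant (hJ : P.IsInitialMessage J)
    (hlin : IsLinearHypergraph P.factors) (hM : 0 < M) (hw : ∀ j, 0 < w j)
    (hdom : CoordDominant M lam w (pd P.objective i) i) (𝒟 : Finset (Finset V)) :
    CoordDominant M lam w (pd (P.starObjective i (P.mixedFactor J 𝒟 i)) i) i := by
  refine P.coordDominant_starObjective hlin hM hw hdom hJ.contDiff_mixedFactor fun x C hC => ?_
  obtain ⟨hCP, hiC⟩ := mem_incidentEdges.1 hC
  by_cases h𝒟 : C ∈ 𝒟
  · rw [mixedFactor_of_mem P h𝒟]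
    exact ⟨x, rfl, le_rfl, fun _ _ => le_rfl⟩
  · obtain ⟨z, hz⟩ := hJ.exists_pd2_le C hCP i hiC
    refine ⟨Function.update z i (x i), Function.update_self .., ?_, fun j hji => ?_⟩
    · change _ ≤ pd (pd _ i) i x
      rw [mixedFactor_of_notMem P h𝒟, pd_comp_eval, pd_comp_eval]
      exact hz (x i)
    · rw [pd2_mixedFactor_eq_zero hCP hji fun hC => absurd hC h𝒟, Pi.zero_apply, abs_zero]
      exact abs_nonneg _

theorem IsInitialMessage.abs_pd_starObjective_le (hJ : P.IsInitialMessage J)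
    (hstar : pd P.objective i xstar = 0) (𝒟 : Finset (Finset V)) :
    |pd (P.starObjective i (P.mixedFactor J 𝒟 i)) i xstar| ≤ P.gradientError J xstar := by
  rw [pd_objective, P.pd_starObjective P.contDiff_fC_of_incident] at hstar
  have hsum : pd (P.starObjective i (P.mixedFactor J 𝒟 i)) i xstar =
      ∑ C ∈ incidentEdges P.factors i,
        (pd (P.mixedFactor J 𝒟 i C) i xstar - pd (P.fC C) i xstar) := by
    rw [P.pd_starObjective hJ.contDiff_mixedFactor, sum_sub_distrib]
    linarith
  have hterm : ∀ C ∈ incidentEdges P.factors i,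
      |pd (P.mixedFactor J 𝒟 i C) i xstar - pd (P.fC C) i xstar| ≤
        ∑ v ∈ C, |deriv (J C v) (xstar v) - pd (P.fC C) v xstar| := by
    intro C hC
    by_cases h𝒟 : C ∈ 𝒟
    · rw [mixedFactor_of_mem P h𝒟, sub_self, abs_zero]
      exact sum_nonneg fun _ _ => abs_nonneg _
    · rw [mixedFactor_of_notMem P h𝒟, pd_comp_eval]
      exact single_le_sum (f := fun v => |deriv (J C v) (xstar v) - pd (P.fC C) v xstar|)
        (fun _ _ => abs_nonneg _) (mem_incidentEdges.1 hC).2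
  rw [hsum]
  calc |∑ C ∈ incidentEdges P.factors i,
        (pd (P.mixedFactor J 𝒟 i C) i xstar - pd (P.fC C) i xstar)|
      ≤ ∑ C ∈ incidentEdges P.factors i,
          ∑ v ∈ C, |deriv (J C v) (xstar v) - pd (P.fC C) v xstar| :=
        (abs_sum_le_sum_abs _ _).trans (sum_le_sum hterm)
    _ ≤ P.gradientError J xstar := sum_le_sum_of_subset_of_nonneg
        (fun C hC => (mem_incidentEdges.1 hC).1) fun _ _ _ => sum_nonneg fun _ _ => abs_nonneg _

theorem IsInitialMessage.isAccurate (hJ : P.IsInitialMessage J)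
    (hlin : IsLinearHypergraph P.factors) (hM : 0 < M) {ω : ℝ} (hω : 0 < ω) (hωw : ∀ j, ω ≤ w j)
    (hlam : lam < 1) (hdom : ∀ i, CoordDominant M lam w (pd P.objective i) i)
    (hstar : ∀ i, pd P.objective i xstar = 0) :
    P.IsAccurate J w xstar (P.gradientError J xstar / (M * ω * (1 - lam))) := by
  intro i 𝒟 y hy hmax
  have hw (j : V) : 0 < w j := hω.trans_le (hωw j)
  have herr : scaledDist w y xstar i ≤ lam * scaledDist w y xstar i +
      |0 - pd (P.starObjective i (P.mixedFactor J 𝒟 i)) i xstar| / (M * w i) := by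
    rw [← hy.pd_eq_zero]
    refine (hJ.coordDominant hlin hM hw (hdom i) 𝒟).scaledDist_le hM hw
      (differentiable_pd (P.contDiff_starObjective hJ.contDiff_mixedFactor) i)
      (div_nonneg (abs_nonneg _) (hw i).le) fun j hji hpd => ?_
    obtain ⟨C, hC, hjC⟩ := exists_mem_of_pd_pd_starObjective_ne_zero hJ hji hpd
    exact hmax C hC j hjC
  have hgrad : |0 - pd (P.starObjective i (P.mixedFactor J 𝒟 i)) i xstar| / (M * w i) ≤
      P.gradientError J xstar / (M * ω) := by
    rw [zero_sub, abs_neg]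
    exact div_le_div₀ (P.gradientError_nonneg J xstar) (hJ.abs_pd_starObjective_le (hstar i) 𝒟)
      (mul_pos hM hω) (mul_le_mul_of_nonneg_left (hωw i) hM.le)
  rw [← div_div, le_div_iff₀ (sub_pos.2 hlam)]
  linarith

end Initialization

section Update

variable {P} {C : Finset V}

theorem starObjective_mixedFactor_singleton (hC : C ∈ incidentEdges P.factors i) (x : V → ℝ) :
    P.starObjective i (P.mixedFactor J {C} i) x = P.fC C x + P.variableMessage J i C (x i) := by
  have hrest : ∑ D ∈ (incidentEdges P.factors i).erase C, P.mixedFactor J {C} i D x =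
      ∑ D ∈ (incidentEdges P.factors i).erase C, J D i (x i) :=
    sum_congr rfl fun D hD => if_neg (notMem_singleton.2 (ne_of_mem_erase hD))
  rw [starObjective, ← add_sum_erase _ _ hC, P.mixedFactor_of_mem (mem_singleton_self C), hrest,
    variableMessage]
  ring

theorem dependsOn_factorObjective_sub_starObjective (hC : C ∈ P.factors) {k : V} (hk : k ∈ C)
    (hki : k ≠ i) : DependsOn (fun x => P.factorObjective J C i x -
      P.starObjective k (P.mixedFactor J {C} k) x) {k}ᶜ := by
  have hrest (x : V → ℝ) :
      P.factorObjective J C i x - P.starObjective k (P.mixedFactor J {C} k) x =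
        ∑ j ∈ (C.erase i).erase k, P.variableMessage J j C (x j) := by
    rw [starObjective_mixedFactor_singleton (mem_incidentEdges.2 ⟨hC, hk⟩), factorObjective,
      ← add_sum_erase _ _ (mem_erase.2 ⟨hki, hk⟩)]
    ring
  intro x y hxy
  simp only [hrest]
  exact sum_congr rfl fun j hj => by rw [hxy j (ne_of_mem_erase hj)]

theorem factorObjective_update_sub (x : V → ℝ) (s : ℝ) :
    P.factorObjective J C i (Function.update x i s) - P.factorObjective J C i x =
      P.fC C (Function.update x i s) - P.fC C x := by
  have hrest : ∑ j ∈ C.erase i, P.variableMessage J j C (Function.update x i s j) =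
      ∑ j ∈ C.erase i, P.variableMessage J j C (x j) :=
    sum_congr rfl fun j hj => by rw [Function.update_of_ne (ne_of_mem_erase hj)]
  rw [factorObjective, factorObjective, hrest, add_sub_add_right_eq_sub]

theorem IsAccurate.scaledDist_le_max (hJ : P.IsAccurate J w xstar ε) (hC : C ∈ P.factors)
    (hi : i ∈ C) {v : V → ℝ} (hv : IsMinOn (P.factorObjective J C i) {x | x i = v i} v) :
    ∀ j ∈ C, scaledDist w v xstar j ≤ max (scaledDist w v xstar i) ε := by
  obtain ⟨k, hk, hkmax⟩ := C.exists_max_image (scaledDist w v xstar) ⟨i, hi⟩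
  suffices hkle : scaledDist w v xstar k ≤ max (scaledDist w v xstar i) ε from
    fun j hj => (hkmax j hj).trans hkle
  rcases eq_or_ne k i with rfl | hki
  · exact le_max_left _ _
  have hmin : IsCoordMin (P.factorObjective J C i) k v :=
    fun s => hv (show Function.update v k s i = v i from Function.update_of_ne hki.symm s v)
  refine le_max_of_le_right (hJ k {C} v
    (hmin.of_dependsOn_sub (dependsOn_factorObjective_sub_starObjective hC hk hki)) ?_)
  simpa only [mem_singleton, forall_eq] using hkmax

theorem IsUpdate.exists_minimizer (hJJ' : P.IsUpdate J J') (hC : C ∈ P.factors) (hi : i ∈ C)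
    (s : ℝ) : ∃ v : V → ℝ, v i = s ∧ IsMinOn (P.factorObjective J C i) {x | x i = v i} v ∧
      ∀ r, J' C i r - J' C i s ≤ P.fC C (Function.update v i r) - P.fC C v := by
  obtain ⟨⟨v, rfl, hv⟩, hmin⟩ := hJJ' C hC i hi s
  refine ⟨v, rfl, fun x hx => hv.trans_le (hmin ⟨x, hx, rfl⟩), fun r => ?_⟩
  have hr := (hJJ' C hC i hi r).2 ⟨Function.update v i r, Function.update_self .., rfl⟩
  rw [← factorObjective_update_sub (J := J), hv]
  exact sub_le_sub_right hr _

theorem IsAccurate.exists_local_extension (hJ : P.IsAccurate J w xstar ε)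
    (hJJ' : P.IsUpdate J J') {𝒟 : Finset (Finset V)} {y : V → ℝ}
    (hmax : ∀ C ∈ 𝒟, ∀ j ∈ C, scaledDist w y xstar j ≤ scaledDist w y xstar i)
    (hC : C ∈ incidentEdges P.factors i) :
    ∃ u : V → ℝ, u i = y i ∧
      (∀ s, P.mixedFactor J' 𝒟 i C (Function.update y i s) - P.mixedFactor J' 𝒟 i C y ≤
        P.fC C (Function.update u i s) - P.fC C u) ∧
      ∀ j ∈ C, scaledDist w u xstar j ≤ max (scaledDist w y xstar i) ε := by
  obtain ⟨hCP, hiC⟩ := mem_incidentEdges.1 hC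
  by_cases h𝒟 : C ∈ 𝒟
  · rw [mixedFactor_of_mem P h𝒟]
    exact ⟨y, rfl, fun _ => le_rfl, fun j hj => le_max_of_le_left (hmax C h𝒟 j hj)⟩
  · obtain ⟨v, hvi, hv, hle⟩ := hJJ'.exists_minimizer hCP hiC (y i)
    refine ⟨v, hvi, fun s => ?_, fun j hj => ?_⟩
    · simpa only [mixedFactor_of_notMem P h𝒟, Function.update_self] using hle s
    · have hvj := hJ.scaledDist_le_max hCP hiC hv j hj
      rwa [scaledDist.eq_def w v xstar i, hvi] at hvj

theorem IsAccurate.update (hJ : P.IsAccurate J w xstar ε) (hJJ' : P.IsUpdate J J')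
    (hlin : IsLinearHypergraph P.factors) (hM : 0 < M) (hw : ∀ j, 0 < w j) (hlam : lam < 1)
    (hε : 0 ≤ ε) (hdom : ∀ i, CoordDominant M lam w (pd P.objective i) i)
    (hstar : ∀ i, pd P.objective i xstar = 0) : P.IsAccurate J' w xstar (lam * ε) := by
  intro i 𝒟 y hy hmax
  choose! u hui hle hudist using fun C => hJ.exists_local_extension hJJ' hmax (C := C)
  obtain ⟨X, hXi, hXu⟩ := hlin.exists_glue hui
  have hXstat : pd P.objective i X = 0 := by
    rw [pd_objective]
    exact (P.isCoordMin_starObjective_of_glue hy hXi hXu hle).pd_eq_zero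
  have hXdist : ∀ j ≠ i, pd (pd P.objective i) j ≠ 0 →
      scaledDist w X xstar j ≤ max (scaledDist w y xstar i) ε := by
    intro j hji hpd
    obtain ⟨C, hC, hjC⟩ := P.exists_mem_of_pd_pd_objective_ne_zero hji hpd
    rw [scaledDist, hXu C hC j hjC]
    exact hudist C hC j hjC
  have herr := (hdom i).scaledDist_le hM hw (differentiable_pd P.contDiff_objective i)
    (le_max_of_le_right hε) hXdist
  rw [hXstat, hstar, sub_self, abs_zero, zero_div, add_zero, scaledDist, hXi] at herr
  exact le_mul_of_le_mul_max ((hdom i).ratio_nonneg hM hw) hlam hε herr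

theorem IsAccurate.iterate {J : ℕ → Finset V → V → ℝ → ℝ} [Nonempty V]
    (hJ : P.IsAccurate (J 0) w xstar ε) (hupd : ∀ t, P.IsUpdate (J t) (J (t + 1)))
    (hlin : IsLinearHypergraph P.factors) (hM : 0 < M) (hw : ∀ j, 0 < w j) (hlam : lam < 1)
    (hε : 0 ≤ ε) (hdom : ∀ i, CoordDominant M lam w (pd P.objective i) i)
    (hstar : ∀ i, pd P.objective i xstar = 0) (t : ℕ) :
    P.IsAccurate (J t) w xstar (lam ^ t * ε) := by
  have hlam0 : 0 ≤ lam := (hdom (Classical.arbitrary V)).ratio_nonneg hM hw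
  induction t with
  | zero => simpa only [pow_zero, one_mul] using hJ
  | succ t ih =>
    rw [pow_succ', mul_assoc]
    exact ih.update (hupd t) hlin hM hw hlam (mul_nonneg (pow_nonneg hlam0 t) hε) hdom hstar

theorem IsAccurate.abs_sub_le (hJ : P.IsAccurate J w xstar ε) (hw : ∀ j, 0 < w j) {a : ℝ}
    (ha : ∀ s, P.f i a + ∑ C ∈ incidentEdges P.factors i, J C i a ≤
      P.f i s + ∑ C ∈ incidentEdges P.factors i, J C i s) :
    |a - xstar i| ≤ ε * w i := by
  have hstar (x : V → ℝ) : P.starObjective i (P.mixedFactor J ∅ i) x =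
      P.f i (x i) + ∑ C ∈ incidentEdges P.factors i, J C i (x i) := rfl
  have hmin : IsCoordMin (P.starObjective i (P.mixedFactor J ∅ i)) i fun _ => a := by
    intro s
    simpa only [hstar, Function.update_self] using ha s
  exact (div_le_iff₀ (hw i)).1 (hJ i ∅ _ hmin fun C hC => absurd hC (notMem_empty C))

theorem isUpdate_of_isLeast_range {Jv : V → Finset V → ℝ → ℝ}
    (hJv : ∀ i, ∀ C ∈ P.factors, i ∈ C → ∀ s, Jv i C s = P.variableMessage J i C s)
    (hJC : ∀ C ∈ P.factors, ∀ i ∈ C, ∀ s, IsLeast (Set.range fun y : V → ℝ =>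
      P.fC C (Function.update y i s) + ∑ j ∈ C.erase i, Jv j C (y j)) (J' C i s)) :
    P.IsUpdate J J' := by
  intro C hC i hi s
  convert hJC C hC i hi s using 1
  have heq (y : V → ℝ) : P.fC C (Function.update y i s) + ∑ j ∈ C.erase i, Jv j C (y j) =
      P.factorObjective J C i (Function.update y i s) := by
    refine congrArg _ (sum_congr rfl fun j hj => ?_)
    rw [Function.update_of_ne (ne_of_mem_erase hj), hJv j C hC (mem_of_mem_erase hj)]
  simp only [heq]
  ext r
  constructor
  · rintro ⟨x, rfl, rfl⟩
    exact ⟨x, by simp only [Function.update_eq_self]⟩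
  · rintro ⟨x, rfl⟩
    exact ⟨Function.update x i s, Function.update_self .., rfl⟩

theorem abs_estimate_sub_le [Nonempty V] {J : ℕ → Finset V → V → ℝ → ℝ} {x : ℕ → V → ℝ}
    (hJ : P.IsInitialMessage (J 0)) (hupd : ∀ t, P.IsUpdate (J t) (J (t + 1)))
    (hlin : IsLinearHypergraph P.factors) (hM : 0 < M) (hw : ∀ j, 0 < w j) (hlam : lam < 1)
    (hdom : ∀ i, CoordDominant M lam w (pd P.objective i) i)
    (hstar : ∀ i, pd P.objective i xstar = 0)
    (hx : ∀ t i s, P.f i (x t i) + ∑ C ∈ incidentEdges P.factors i, J t C i (x t i) ≤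
      P.f i s + ∑ C ∈ incidentEdges P.factors i, J t C i s) (t : ℕ) (i : V) :
    |x t i - xstar i| ≤ ((1 / M) * (univ.sup' univ_nonempty w / univ.inf' univ_nonempty w)) *
      (lam ^ t / (1 - lam)) * P.gradientError (J 0) xstar := by
  set ω := univ.inf' univ_nonempty w
  have hω : 0 < ω := (lt_inf'_iff _).2 fun j _ => hw j
  have hlam0 : 0 ≤ lam := (hdom i).ratio_nonneg hM hw
  have hlam1 : 0 < 1 - lam := sub_pos.2 hlam
  have hε : 0 ≤ P.gradientError (J 0) xstar / (M * ω * (1 - lam)) :=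
    div_nonneg (P.gradientError_nonneg _ _) (by positivity)
  have hacc := (hJ.isAccurate hlin hM hω (fun j => inf'_le w (mem_univ j)) hlam hdom hstar).iterate
    hupd hlin hM hw hlam hε hdom hstar t
  calc |x t i - xstar i|
      ≤ lam ^ t * (P.gradientError (J 0) xstar / (M * ω * (1 - lam))) * w i :=
        hacc.abs_sub_le hw (hx t i)
    _ ≤ lam ^ t * (P.gradientError (J 0) xstar / (M * ω * (1 - lam))) *
          univ.sup' univ_nonempty w :=
        mul_le_mul_of_nonneg_left (le_sup' w (mem_univ i)) (mul_nonneg (pow_nonneg hlam0 t) hε)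
    _ = ((1 / M) * (univ.sup' univ_nonempty w / ω)) * (lam ^ t / (1 - lam)) *
          P.gradientError (J 0) xstar := by field_simp

end Update

end SeparableProgram

theorem minSum_general_convergence_pairwise_intersection_general
    {V : Type*} [Fintype V] [DecidableEq V] [Nonempty V]
    (𝒞 : Finset (Finset V)) (f : V → ℝ → ℝ) (fC : Finset V → (V → ℝ) → ℝ)
    (hf_smooth : ∀ i, ContDiff ℝ 2 (f i)) (hfC_smooth : ∀ C ∈ 𝒞, ContDiff ℝ 2 (fC C))
    (hfC_local : ∀ C ∈ 𝒞, ∀ x y : V → ℝ, (∀ i ∈ C, x i = y i) → fC C x = fC C y)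
    (F : (V → ℝ) → ℝ) (hF : F = fun x => (∑ i, f i (x i)) + ∑ C ∈ 𝒞, fC C x)
    (M : ℝ) (hM : 0 < M) (hMle : ∀ (i : V) (x : V → ℝ), M ≤ pd2 F i i x)
    (xstar : V → ℝ) (hxstar : ∀ i, pd F i xstar = 0)
    (lam : ℝ) (w : V → ℝ) (hlam1 : lam < 1) (hw : ∀ i, 0 < w i)
    (hdd : ∀ (i : V) (x : V → ℝ),
      ∑ j ∈ univ.erase i, w j * |pd2 F i j x| ≤ lam * w i * pd2 F i i x)
    (hpair : ∀ i j : V, i ≠ j → (𝒞.filter (fun C => i ∈ C ∧ j ∈ C)).card ≤ 1)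
    (Jv : ℕ → V → Finset V → ℝ → ℝ) (JC : ℕ → Finset V → V → ℝ → ℝ)
    (hJv : ∀ (t : ℕ) (i : V) (C : Finset V), C ∈ 𝒞 → i ∈ C → ∀ xi : ℝ,
      Jv (t + 1) i C xi =
        f i xi + ∑ C' ∈ (𝒞.filter (fun C' => i ∈ C')).erase C, JC t C' i xi)
    (hJC : ∀ (t : ℕ) (C : Finset V), C ∈ 𝒞 → ∀ i ∈ C, ∀ xi : ℝ,
      IsLeast (Set.range fun y : V → ℝ =>
          fC C (Function.update y i xi) + ∑ i' ∈ C.erase i, Jv (t + 1) i' C (y i'))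
        (JC (t + 1) C i xi))
    (hJC0smooth : ∀ C ∈ 𝒞, ∀ i ∈ C, ContDiff ℝ 2 (JC 0 C i))
    (hJC0conv : ∀ C ∈ 𝒞, ∀ i ∈ C, ∃ z : V → ℝ, ∀ xi : ℝ,
      pd2 (fC C) i i (Function.update z i xi) ≤ deriv (deriv (JC 0 C i)) xi)
    (xEst : ℕ → V → ℝ)
    (hxEst : ∀ (t : ℕ) (i : V) (y : ℝ),
      f i (xEst t i) + ∑ C ∈ 𝒞.filter (fun C => i ∈ C), JC t C i (xEst t i) ≤
        f i y + ∑ C ∈ 𝒞.filter (fun C => i ∈ C), JC t C i y) :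
    (∀ (t : ℕ) (r : V),
      |xEst t r - xstar r| ≤
        ((1 / M) * (univ.sup' univ_nonempty w / univ.inf' univ_nonempty w)) *
          (lam ^ t / (1 - lam)) *
          ∑ C ∈ 𝒞, ∑ v ∈ C, |deriv (JC 0 C v) (xstar v) - pd (fC C) v xstar|) ∧
    ∀ r, Tendsto (fun t => xEst t r) atTop (nhds (xstar r)) := by
  subst hF
  let P : SeparableProgram V := ⟨𝒞, f, fC, hf_smooth, hfC_smooth, hfC_local⟩
  have hdom := P.coordDominant_objective hMle hdd
  have hupd (t : ℕ) : P.IsUpdate (JC t) (JC (t + 1)) :=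
    SeparableProgram.isUpdate_of_isLeast_range (hJv t) (hJC t)
  have hbound := SeparableProgram.abs_estimate_sub_le (P := P) ⟨hJC0smooth, hJC0conv⟩ hupd hpair
    hM hw hlam1 hdom hxstar hxEst
  refine ⟨hbound, fun r => tendsto_iff_norm_sub_tendsto_zero.2
    (squeeze_zero (fun _ => norm_nonneg _) (hbound · r) ?_)⟩
  have hpow := tendsto_pow_atTop_nhds_zero_of_lt_one ((hdom r).ratio_nonneg hM hw) hlam1
  simpa only [zero_div, mul_zero, zero_mul] using
    ((hpow.div_const (1 - lam)).const_mul _).mul_const _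

/-- **Convergence of min-sum for general separable convex programs, case (i)**
(Theorem 2(i) of Moallemi–Van Roy).  If the objective `F` is `(λ,w)`-scaled diagonally
dominant and each pair of distinct variables participates in at most one common factor,
then the factor-graph min-sum estimates satisfy
`‖x⁽ᵗ⁾ - x*‖_∞ ≤ K (λᵗ/(1-λ)) Σ_{C∈𝒞} Σ_{v∈C} |(J⁰_{C→v})'(x*_v) - ∂f_C/∂x_v(x*_C)|`
and converge to the unique optimum `x*`. -/
theorem minSum_general_convergence_pairwise_intersection
    {V : Type*} [Fintype V] [DecidableEq V] [Nonempty V]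
    -- the hypergraph: a collection of factors, each involving at least two variables
    (𝒞 : Finset (Finset V)) (hcard : ∀ C ∈ 𝒞, 2 ≤ C.card)
    -- the factors of the general separable convex program
    (f : V → ℝ → ℝ) (fC : Finset V → (V → ℝ) → ℝ)
    (hf_sconv : ∀ i, StrictConvexOn ℝ Set.univ (f i))
    (hf_coer : ∀ i, Tendsto (f i) (cocompact ℝ) atTop)
    (hf_smooth : ∀ i, ContDiff ℝ 2 (f i))
    (hfC_conv : ∀ C ∈ 𝒞, ConvexOn ℝ Set.univ (fC C))
    (hfC_smooth : ∀ C ∈ 𝒞, ContDiff ℝ 2 (fC C))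
    -- `f_C` depends only on the coordinates in `C`
    (hfC_local : ∀ C ∈ 𝒞, ∀ x y : V → ℝ, (∀ i ∈ C, x i = y i) → fC C x = fC C y)
    -- the objective function
    (F : (V → ℝ) → ℝ)
    (hF : F = fun x => (∑ i, f i (x i)) + ∑ C ∈ 𝒞, fC C x)
    -- `M = min_i inf_x ∂²F/∂x_i²(x) > 0`
    (M : ℝ) (hM : 0 < M) (hMle : ∀ (i : V) (x : V → ℝ), M ≤ pd2 F i i x)
    -- the unique optimal solution
    (xstar : V → ℝ) (hxstar : ∀ y, y ≠ xstar → F xstar < F y)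
    -- scaled diagonal dominance of `F`
    (lam : ℝ) (w : V → ℝ) (hlam0 : 0 < lam) (hlam1 : lam < 1) (hw : ∀ i, 0 < w i)
    (hdd : ∀ (i : V) (x : V → ℝ),
      ∑ j ∈ univ.erase i, w j * |pd2 F i j x| ≤ lam * w i * pd2 F i i x)
    -- each pair of distinct vertices participates in at most one common factor
    (hpair : ∀ i j : V, i ≠ j → (𝒞.filter (fun C => i ∈ C ∧ j ∈ C)).card ≤ 1)
    -- the factor-graph min-sum messages and their update rules (minima are attained)
    (Jv : ℕ → V → Finset V → ℝ → ℝ) (JC : ℕ → Finset V → V → ℝ → ℝ)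
    (hJv : ∀ (t : ℕ) (i : V) (C : Finset V), C ∈ 𝒞 → i ∈ C → ∀ xi : ℝ,
      Jv (t + 1) i C xi =
        f i xi + ∑ C' ∈ (𝒞.filter (fun C' => i ∈ C')).erase C, JC t C' i xi)
    (hJC : ∀ (t : ℕ) (C : Finset V), C ∈ 𝒞 → ∀ i ∈ C, ∀ xi : ℝ,
      IsLeast (Set.range fun y : V → ℝ =>
          fC C (Function.update y i xi) + ∑ i' ∈ C.erase i, Jv (t + 1) i' C (y i'))
        (JC (t + 1) C i xi))
    -- the factor initialization assumption
    (hJC0smooth : ∀ C ∈ 𝒞, ∀ i ∈ C, ContDiff ℝ 2 (JC 0 C i))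
    (hJC0conv : ∀ C ∈ 𝒞, ∀ i ∈ C, ∃ z : V → ℝ, ∀ xi : ℝ,
      pd2 (fC C) i i (Function.update z i xi) ≤ deriv (deriv (JC 0 C i)) xi)
    -- the estimates: unique minimizers of the local objectives `b⁽ᵗ⁾_i`
    (xEst : ℕ → V → ℝ)
    (hxEst : ∀ (t : ℕ) (i : V) (y : ℝ), y ≠ xEst t i →
      f i (xEst t i) + ∑ C ∈ 𝒞.filter (fun C => i ∈ C), JC t C i (xEst t i) <
        f i y + ∑ C ∈ 𝒞.filter (fun C => i ∈ C), JC t C i y) :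
    (∀ (t : ℕ) (r : V),
      |xEst t r - xstar r| ≤
        ((1 / M) * (univ.sup' univ_nonempty w / univ.inf' univ_nonempty w)) *
          (lam ^ t / (1 - lam)) *
          ∑ C ∈ 𝒞, ∑ v ∈ C, |deriv (JC 0 C v) (xstar v) - pd (fC C) v xstar|) ∧
    ∀ r, Tendsto (fun t => xEst t r) atTop (nhds (xstar r)) :=
  minSum_general_convergence_pairwise_intersection_general 𝒞 f fC hf_smooth hfC_smooth hfC_local
    F hF M hM hMle xstar (fun _ => IsCoordMin.pd_eq_zero fun _ => le_of_forall_ne_lt hxstar _)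
    lam w hlam1 hw hdd hpair Jv JC hJv hJC hJC0smooth hJC0conv xEst
    fun t i => le_of_forall_ne_lt (g := fun s => f i s + ∑ C ∈ 𝒞 with i ∈ C, JC t C i s)
      (hxEst t i)
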